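/- The deterministic zero-rate threshold for online deletions satisfies p0_on,d ≤ 1/(3 − 2·p0_adv). In particular, if p0_adv < 1/2 then p0_on,d < 1/2. -/

import Mathlib

open scoped Classical

/-- `advGood p` : there is a rate `δ > 0` such that for infinitely many `n` there is a
code `C ⊆ {0,1}^n` of size at least `2^{δn}` in which every two distinct codewords
have longest common subsequence of length less than `(1−p)n`. -/
def advGood (p : ℝ) : Prop :=
  ∃ δ : ℝ, 0 < δ ∧ ∀ n₀ : ℕ, ∃ n ≥ n₀, ∃ C : Finset (List Bool),
    (∀ c ∈ C, c.length = n) ∧ (C.card : ℝ) ≥ 2 ^ (δ * n) ∧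
    ∀ x ∈ C, ∀ y ∈ C, x ≠ y →
      ∀ z : List Bool, z.Sublist x → z.Sublist y → (z.length : ℝ) < (1 - p) * n

/-- The zero-rate threshold for adversarial deletions. -/
noncomputable def p0adv : ℝ := sSup {p : ℝ | p ∈ Set.Icc (0 : ℝ) 1 ∧ advGood p}

/-- The output of the deterministic online deletion channel described by `f` on input
`x`: bit `x_i` is transmitted iff `f` applied to the prefix `x_1…x_i` returns `true`. -/
def onlineOutput (f : List Bool → Bool) (x : List Bool) : List Bool :=
  (List.range x.length).filterMap
    (fun i => if f (x.take (i + 1)) then some (x.getD i false) else none)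

/-- The online channel `f` deletes at most `pn` bits on every input of length `n`. -/
def deletesAtMost (f : List Bool → Bool) (n : ℕ) (p : ℝ) : Prop :=
  ∀ x : List Bool, x.length = n → ((n - (onlineOutput f x).length : ℕ) : ℝ) ≤ p * n

/-- `onGood p` : there is a rate `δ > 0` such that for every `ε > 0` there are
infinitely many `n` admitting a code `C ⊆ {0,1}^n` of size at least `2^{δn}` and a
decoder `Dec` into `C` such that every deterministic online deletion channel deleting
at most `pn` bits on every input miscommunicates at most `ε|C|` codewords. -/
def onGood (p : ℝ) : Prop :=
  ∃ δ : ℝ, 0 < δ ∧ ∀ ε : ℝ, 0 < ε → ∀ n₀ : ℕ, ∃ n ≥ n₀, ∃ C : Finset (List Bool),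
    (∀ c ∈ C, c.length = n) ∧ (C.card : ℝ) ≥ 2 ^ (δ * n) ∧
    ∃ Dec : List Bool → List Bool, (∀ s, Dec s ∈ C) ∧
      ∀ f : List Bool → Bool, deletesAtMost f n p →
        ((C.filter (fun c => Dec (onlineOutput f c) ≠ c)).card : ℝ) ≤ ε * C.card

/-- The deterministic zero-rate threshold for online deletions. -/
noncomputable def p0ond : ℝ := sSup {p : ℝ | p ∈ Set.Icc (0 : ℝ) 1 ∧ onGood p}

/-! If a decoder makes at most `E` errors against every admissible channel, two attacks bound the
code `C`. Put `D = ⌊p n⌋` and split every codeword of length `n` into a prefix and a suffix of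
length `2 D`; let `P` be the number of distinct prefixes of codewords.

* Transmit the prefix and reduce the suffix to `D` copies of its majority bit. For one value of the
  bit this covers half of the code, and the output is determined by the prefix, so
  `|C| ≤ 2 (P + E)`.
* Choose one codeword for each prefix. Among these the prefix reveals the suffix, so a channel that
  deletes the prefix acts on the suffix as an adversary who knows it. For `q > p0adv`, all but `N`
  of the representatives can be paired off so that partners have suffixes with a common subsequence
  of length `(1 - q) 2 D`, where `N` may be any exponential in `n`, however small its rate. Sending
  the common subsequence for both partners forces an error on one of them, so `P ≤ 2 E + N`. This
  stays within the budget if `n ≤ (1 - q) 2 D + D`, which holds for large `n` if `p (3 - 2 q) > 1`.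

Hence `|C| ≤ 6 E + 2 N`, which is impossible for `|C| ≥ N ^ 2`, `N > 4` and `E = |C| / 12`. -/

open Filter
open scoped Finset Topology

/-! ### Online channels -/

section Channel

variable {f g : List Bool → Bool} {u x z : List Bool}

@[simp]
lemma onlineOutput_nil (f : List Bool → Bool) : onlineOutput f [] = [] := rfl

lemma onlineOutput_concat (f : List Bool → Bool) (x : List Bool) (a : Bool) :
    onlineOutput f (x ++ [a]) = onlineOutput f x ++ if f (x ++ [a]) then [a] else [] := by
  unfold onlineOutput
  rw [List.length_append, List.length_singleton, List.range_succ, List.filterMap_append]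
  congr 1
  · refine List.filterMap_congr fun i hi => ?_
    have hi : i < x.length := List.mem_range.1 hi
    rw [List.take_append_of_le_length (by lia), List.getD_append _ _ _ _ hi]
  · have hlast : (x ++ [a]).take (x.length + 1) = x ++ [a] := List.take_of_length_le (by simp)
    cases h : f (x ++ [a]) <;> simp [hlast, h]

lemma onlineOutput_append (f : List Bool → Bool) (w v : List Bool) :
    onlineOutput f (w ++ v) = onlineOutput f w ++ onlineOutput (fun u => f (w ++ u)) v := by
  induction v using List.reverseRecOn with
  | nil => simp
  | append_singleton v a ih =>
    rw [← List.append_assoc, onlineOutput_concat, ih, onlineOutput_concat]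
    simp [List.append_assoc]

lemma onlineOutput_congr (h : ∀ u, u <+: x → u ≠ [] → f u = g u) :
    onlineOutput f x = onlineOutput g x := by
  induction x using List.reverseRecOn with
  | nil => rfl
  | append_singleton x a ih =>
    rw [onlineOutput_concat, onlineOutput_concat, h _ List.prefix_rfl (by simp),
      ih fun u hu => h u (hu.trans (List.prefix_append x [a]))]

@[simp]
lemma onlineOutput_true (x : List Bool) : onlineOutput (fun _ => true) x = x := by
  induction x using List.reverseRecOn with
  | nil => rfl
  | append_singleton x a ih => simp [onlineOutput_concat, ih]

@[simp]
lemma onlineOutput_false (x : List Bool) : onlineOutput (fun _ => false) x = [] := by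
  induction x using List.reverseRecOn with
  | nil => rfl
  | append_singleton x a ih => simp [onlineOutput_concat, ih]

lemma onlineOutput_mono (h : f ≤ g) (x : List Bool) :
    (onlineOutput f x).Sublist (onlineOutput g x) := by
  induction x using List.reverseRecOn with
  | nil => simp
  | append_singleton x a ih =>
    rw [onlineOutput_concat, onlineOutput_concat]
    refine ih.append ?_
    cases hf : f (x ++ [a]) with
    | true => rw [(hf.symm.trans_le (h _)).antisymm (Bool.le_true _)]
    | false => simp

lemma onlineOutput_sublist (f : List Bool → Bool) (x : List Bool) :
    (onlineOutput f x).Sublist x := by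
  simpa using onlineOutput_mono (f := f) (g := fun _ => true) (fun _ => Bool.le_true _) x

lemma length_add_length_onlineOutput_le (f : List Bool → Bool) (h : u <+: x) :
    u.length + (onlineOutput f x).length ≤ x.length + (onlineOutput f u).length := by
  obtain ⟨v, rfl⟩ := h
  have hv := (onlineOutput_sublist (fun w => f (u ++ w)) v).length_le
  rw [onlineOutput_append, List.length_append, List.length_append]
  lia

lemma exists_onlineOutput_eq_of_sublist (h : z.Sublist x) :
    ∃ f : List Bool → Bool, onlineOutput f x = z := by
  induction x using List.reverseRecOn generalizing z with
  | nil => exact ⟨fun _ => true, by simp [List.sublist_nil.1 h]⟩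
  | append_singleton x a ih =>
    obtain ⟨z₁, z₂, rfl, h₁, h₂⟩ := List.sublist_append_iff.1 h
    obtain ⟨f, rfl⟩ := ih h₁
    refine ⟨Function.update f (x ++ [a]) (decide (z₂ ≠ [])), ?_⟩
    rw [onlineOutput_concat]
    congr 1
    · refine onlineOutput_congr fun u hu _ => Function.update_of_ne ?_ _ _
      rintro rfl
      simpa using hu.length_le
    · rcases List.sublist_singleton.1 h₂ with rfl | rfl <;> simp

/-- The channel `f` restricted to a budget of `D` deletions: it transmits a bit whenever `f` has
already exceeded the budget. It turns an attack on some codewords into a channel that is admissible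
on every input. -/
def capDeletions (D : ℕ) (f : List Bool → Bool) (u : List Bool) : Bool :=
  f u || decide ((onlineOutput f u).length + D < u.length)

lemma length_le_length_onlineOutput_capDeletions (D : ℕ) (f : List Bool → Bool) (x : List Bool) :
    x.length ≤ (onlineOutput (capDeletions D f) x).length + D := by
  induction x using List.reverseRecOn with
  | nil => simp
  | append_singleton x a ih =>
    cases h : capDeletions D f (x ++ [a]) with
    | true =>
      simp only [onlineOutput_concat, h, if_true, List.length_append, List.length_singleton]
      lia
    | false =>
      have hbudget : (x ++ [a]).length ≤ (onlineOutput f (x ++ [a])).length + D := by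
        simpa using (Bool.or_eq_false_iff.1 h).2
      have hmono := (onlineOutput_mono (g := capDeletions D f)
        (fun _ => Bool.left_le_or _ _) (x ++ [a])).length_le
      lia

lemma onlineOutput_capDeletions {D : ℕ} (h : x.length ≤ (onlineOutput f x).length + D) :
    onlineOutput (capDeletions D f) x = onlineOutput f x := by
  refine onlineOutput_congr fun u hu _ => ?_
  have hprefix := length_add_length_onlineOutput_le f hu
  have hbudget : ¬ (onlineOutput f u).length + D < u.length := by lia
  simp [capDeletions, hbudget]

lemma deletesAtMost_capDeletions {D n : ℕ} {p : ℝ} (hD : (D : ℝ) ≤ p * n)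
    (f : List Bool → Bool) : deletesAtMost (capDeletions D f) n p := by
  intro x hx
  have hlength := length_le_length_onlineOutput_capDeletions D f x
  exact (Nat.cast_le.2 (by lia)).trans hD

/-- The channel that runs `f` on the first `t` bits and then `G w` on the remaining ones, where `w`
is the prefix of length `t` that it has read. Both attacks have this form. -/
def switchAfter (t : ℕ) (f : List Bool → Bool) (G : List Bool → List Bool → Bool)
    (u : List Bool) : Bool :=
  if u.length ≤ t then f u else G (u.take t) (u.drop t)

lemma onlineOutput_switchAfter (t : ℕ) (f : List Bool → Bool) (G : List Bool → List Bool → Bool)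
    (x : List Bool) : onlineOutput (switchAfter t f G) x =
      onlineOutput f (x.take t) ++ onlineOutput (G (x.take t)) (x.drop t) := by
  conv_lhs => rw [← List.take_append_drop t x, onlineOutput_append]
  congr 1
  · refine onlineOutput_congr fun u hu _ => if_pos ?_
    exact hu.length_le.trans (List.length_take_le t x)
  · refine onlineOutput_congr fun u hu hne => ?_
    have hpos : 0 < u.length := List.length_pos_iff.2 hne
    have hle := hu.length_le
    rw [List.length_drop] at hle
    have htake : (x.take t).length = t := List.length_take_of_le (by lia)
    have hlong : ¬ (x.take t ++ u).length ≤ t := by rw [List.length_append]; lia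
    rw [switchAfter, if_neg hlong, List.take_left' htake, List.drop_left' htake]

/-- The channel that transmits exactly the first `m` occurrences of the bit `b`. Its output is
the same on all inputs that contain `b` at least `m` times. -/
def keepFirst (b : Bool) (m : ℕ) (u : List Bool) : Bool :=
  decide (u.getLast? = some b ∧ u.count b ≤ m)

lemma onlineOutput_keepFirst (b : Bool) (m : ℕ) (x : List Bool) :
    onlineOutput (keepFirst b m) x = List.replicate (min m (x.count b)) b := by
  induction x using List.reverseRecOn with
  | nil => simp
  | append_singleton x a ih =>
    rw [onlineOutput_concat, ih]
    obtain rfl | hab := eq_or_ne a b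
    · rcases le_or_gt (x.count a + 1) m with hm | hm
      · simp [keepFirst, hm, Nat.le_of_succ_le hm, List.replicate_succ']
      · simp [keepFirst, hm.not_ge, Nat.le_of_lt_succ hm, hm.le]
    · simp [keepFirst, hab]

/-- Once the prefix of length `t` identifies the input, the rest can be treated with full knowledge
of it. -/
lemma exists_onlineOutput_eq_of_injOn_take {S : Set (List Bool)} {t : ℕ}
    {Z : List Bool → List Bool} (hS : S.InjOn (List.take t))
    (hZ : ∀ x ∈ S, (Z x).Sublist (x.drop t)) :
    ∃ f : List Bool → Bool, ∀ x ∈ S, onlineOutput f x = Z x := by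
  choose! g hg using fun x hx => exists_onlineOutput_eq_of_sublist (hZ x hx)
  refine ⟨switchAfter t (fun _ => false) fun w => g (Function.invFunOn (List.take t) S w),
    fun x hx => ?_⟩
  rw [onlineOutput_switchAfter, onlineOutput_false, hS.leftInvOn_invFunOn hx, hg x hx,
    List.nil_append]

end Channel

/-! ### Counting -/

section Counting

lemma exists_card_le_two_mul_card_filter_count {α : Type*} (C : Finset α)
    {v : α → List Bool} {m : ℕ} (hm : ∀ c ∈ C, 2 * m ≤ (v c).length + 1) :
    ∃ b : Bool, #C ≤ 2 * #{c ∈ C | m ≤ (v c).count b} := by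
  have hcover : #C ≤ #{c ∈ C | m ≤ (v c).count true} + #{c ∈ C | m ≤ (v c).count false} := by
    refine (Finset.card_le_card fun c hc => ?_).trans (Finset.card_union_le _ _)
    have hlength := hm c hc
    have hcount := List.count_true_add_count_false (v c)
    simp only [Finset.mem_union, Finset.mem_filter, hc, true_and]
    lia
  by_contra! h
  linarith [h true, h false]

variable {α β : Type*} [DecidableEq α] [DecidableEq β]

/-- The codewords `c` of `C` that are decoded wrongly when the channel outputs `out c`. The
channel is an arbitrary map, since counting errors does not depend on how it works. -/
def decodingErrors (C : Finset α) (Dec : β → α) (out : α → β) : Finset α :=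
  {c ∈ C | Dec (out c) ≠ c}

lemma card_le_card_image_add_card_decodingErrors {C S : Finset α} (hS : S ⊆ C) (Dec : β → α)
    (out : α → β) : #S ≤ #(S.image out) + #(decodingErrors C Dec out) := by
  have hcorrect : #{c ∈ S | Dec (out c) = c} ≤ #(S.image out) := by
    refine Finset.card_le_card_of_injOn out (fun c hc => ?_) fun c hc d hd hcd => ?_
    · exact Finset.mem_image_of_mem out (Finset.mem_filter.1 hc).1
    · rw [← (Finset.mem_filter.1 hc).2, ← (Finset.mem_filter.1 hd).2, hcd]
  have hwrong : #{c ∈ S | ¬ Dec (out c) = c} ≤ #(decodingErrors C Dec out) :=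
    Finset.card_le_card (Finset.filter_subset_filter _ hS)
  rw [← Finset.card_filter_add_card_filter_not (s := S) (fun c => Dec (out c) = c)]
  exact add_le_add hcorrect hwrong

lemma exists_maximal_pairing [Nonempty β] (P : α → β → Prop) (R : Finset α) :
    ∃ S ⊆ R, ∃ Z : α → β, (∀ x ∈ S, P x (Z x)) ∧ 2 * #(S.image Z) ≤ #S ∧
      ((R \ S : Finset α) : Set α).Pairwise fun x y => ∀ z, P x z → ¬ P y z := by
  induction R using Finset.strongInduction with
  | H R ih =>
  by_cases hR : (R : Set α).Pairwise fun x y => ∀ z, P x z → ¬ P y z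
  · exact ⟨∅, R.empty_subset, fun _ => Classical.arbitrary β, by simpa using hR⟩
  simp only [Set.Pairwise, Finset.mem_coe] at hR
  push Not at hR
  obtain ⟨x, hx, y, hy, hxy, z, hxz, hyz⟩ := hR
  have hP_pair : ∀ u ∈ ({x, y} : Finset α), P u z := by simp [hxz, hyz]
  have hpair : {x, y} ⊆ R := Finset.insert_subset hx (Finset.singleton_subset_iff.2 hy)
  obtain ⟨S, hSR, Z, hZ, himage, hS⟩ :=
    ih (R \ {x, y}) (Finset.sdiff_ssubset hpair (Finset.insert_nonempty x {y}))
  have hdisj : Disjoint {x, y} S := Finset.disjoint_of_subset_right hSR Finset.disjoint_sdiff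
  let Z' : α → β := fun u => if u ∈ ({x, y} : Finset α) then z else Z u
  have hZ'_pair : ∀ u ∈ ({x, y} : Finset α), Z' u = z := fun u hu => if_pos hu
  have hZ'_S : ∀ u ∈ S, Z' u = Z u :=
    fun u hu => if_neg fun hu' => Finset.disjoint_left.1 hdisj hu' hu
  have himage' : ({x, y} ∪ S).image Z' = insert z (S.image Z) := by
    rw [Finset.image_union, Finset.image_congr hZ'_S, Finset.image_congr hZ'_pair,
      Finset.image_const (Finset.insert_nonempty x {y}), Finset.insert_eq]
  refine ⟨{x, y} ∪ S, Finset.union_subset hpair (hSR.trans Finset.sdiff_subset), Z', ?_, ?_, ?_⟩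
  · intro u hu
    rcases Finset.mem_union.1 hu with hu | hu
    · exact hZ'_pair u hu ▸ hP_pair u hu
    · exact hZ'_S u hu ▸ hZ u hu
  · have hle := Finset.card_insert_le z (S.image Z)
    rw [himage', Finset.card_union_of_disjoint hdisj, Finset.card_pair hxy]
    lia
  · rwa [sdiff_sdiff_left] at hS

end Counting

/-! ### The two attacks -/

/-- The words `x` and `y` have a common subsequence of length at least `ℓ`. The bound is real so
that it can be a fraction of the length; equal words are allowed. -/
def ShareSubseq (ℓ : ℝ) (x y : List Bool) : Prop :=
  ∃ z : List Bool, z.Sublist x ∧ z.Sublist y ∧ ℓ ≤ z.length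

/-- The decoder `Dec` makes at most `E` errors on the code `C` against every online channel that
deletes at most `p * n` bits of every word of length `n`. This is the property of the pair
`(C, Dec)` in `onGood`, with an absolute number of errors. -/
def CorrectsOnline (C : Finset (List Bool)) (Dec : List Bool → List Bool) (n : ℕ) (p E : ℝ) :
    Prop :=
  ∀ f : List Bool → Bool, deletesAtMost f n p →
    (#(decodingErrors C Dec (onlineOutput f)) : ℝ) ≤ E

namespace CorrectsOnline

variable {C : Finset (List Bool)} {Dec : List Bool → List Bool} {n D : ℕ} {p E : ℝ}

lemma nonneg (h : CorrectsOnline C Dec n p E) (hD : (D : ℝ) ≤ p * n) : 0 ≤ E :=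
  (Nat.cast_nonneg _).trans (h _ (deletesAtMost_capDeletions hD fun _ => true))

/-- It suffices that the attack `f` respects the budget on the attacked words `S`, since it can be
stopped on all others. -/
lemma card_le_card_image_add (h : CorrectsOnline C Dec n p E) (hD : (D : ℝ) ≤ p * n)
    {S : Finset (List Bool)} (hS : S ⊆ C) {f : List Bool → Bool}
    (hf : ∀ c ∈ S, c.length ≤ (onlineOutput f c).length + D) :
    (#S : ℝ) ≤ #(S.image (onlineOutput f)) + E := by
  have hcount := card_le_card_image_add_card_decodingErrors hS Dec
    (onlineOutput (capDeletions D f))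
  rw [Finset.image_congr fun c hc => onlineOutput_capDeletions (hf c hc)] at hcount
  calc (#S : ℝ)
      ≤ #(S.image (onlineOutput f)) +
          #(decodingErrors C Dec (onlineOutput (capDeletions D f))) := by exact_mod_cast hcount
    _ ≤ #(S.image (onlineOutput f)) + E := by gcongr; exact h _ (deletesAtMost_capDeletions hD f)

lemma card_le_two_mul_card_image_take_add (h : CorrectsOnline C Dec n p E)
    (hD : (D : ℝ) ≤ p * n) {t s : ℕ} (hC : ∀ c ∈ C, (c.drop t).length = s) (hs : s ≤ 2 * D) :
    (#C : ℝ) ≤ 2 * (#(C.image (List.take t)) + E) := by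
  set m := s - s / 2
  obtain ⟨b, hb⟩ := exists_card_le_two_mul_card_filter_count C (v := List.drop t) (m := m)
    fun c hc => by rw [hC c hc]; lia
  set S : Finset (List Bool) := {c ∈ C | m ≤ (c.drop t).count b}
  set f := switchAfter t (fun _ => true) fun _ => keepFirst b m
  have hout : ∀ c ∈ S, onlineOutput f c = c.take t ++ List.replicate m b := fun c hc => by
    rw [onlineOutput_switchAfter, onlineOutput_true, onlineOutput_keepFirst,
      min_eq_left (Finset.mem_filter.1 hc).2]
  have hbudget : ∀ c ∈ S, c.length ≤ (onlineOutput f c).length + D := fun c hc => by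
    have hlength := congrArg List.length (List.take_append_drop t c)
    rw [List.length_append, hC c (Finset.mem_filter.1 hc).1] at hlength
    rw [hout c hc, List.length_append, List.length_replicate]
    lia
  have himage : #(S.image (onlineOutput f)) ≤ #(C.image (List.take t)) := by
    rw [Finset.image_congr hout, ← Function.comp_def (fun w => w ++ List.replicate m b),
      ← Finset.image_image]
    exact Finset.card_image_le.trans
      (Finset.card_le_card (Finset.image_subset_image (Finset.filter_subset _ _)))
  calc (#C : ℝ) ≤ 2 * #S := by exact_mod_cast hb
    _ ≤ 2 * (#(S.image (onlineOutput f)) + E) := by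
      gcongr; exact h.card_le_card_image_add hD (Finset.filter_subset _ _) hbudget
    _ ≤ 2 * (#(C.image (List.take t)) + E) := by gcongr

lemma card_image_take_le (h : CorrectsOnline C Dec n p E) (hD : (D : ℝ) ≤ p * n) {t : ℕ}
    {ℓ N : ℝ} (hC : ∀ c ∈ C, (c.length : ℝ) ≤ ℓ + D)
    (hpair : ∀ T ⊆ C, N < #T →
      ∃ x ∈ T, ∃ y ∈ T, x ≠ y ∧ ShareSubseq ℓ (x.drop t) (y.drop t)) :
    (#(C.image (List.take t)) : ℝ) ≤ 2 * E + N := by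
  obtain ⟨R, hRC, hRinj, hRimage⟩ := Finset.exists_subset_injOn_image_eq_of_surjOn
    (f := List.take t) (C : Set (List Bool)) (C.image (List.take t))
    (by rw [Finset.coe_image]; exact Set.surjOn_image _ _)
  rw [Finset.coe_subset] at hRC
  obtain ⟨S, hSR, Z, hZ, hSimage, hunpaired⟩ := exists_maximal_pairing
    (fun (x z : List Bool) => z.Sublist (x.drop t) ∧ ℓ ≤ z.length) R
  have hrest : (#(R \ S) : ℝ) ≤ N := by
    by_contra! hlt
    obtain ⟨x, hx, y, hy, hxy, z, hzx, hzy, hz⟩ :=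
      hpair _ (Finset.sdiff_subset.trans hRC) hlt
    exact hunpaired hx hy hxy z ⟨hzx, hz⟩ ⟨hzy, hz⟩
  obtain ⟨f, hf⟩ := exists_onlineOutput_eq_of_injOn_take (hRinj.mono hSR) fun x hx => (hZ x hx).1
  have hbudget : ∀ c ∈ S, c.length ≤ (onlineOutput f c).length + D := fun c hc => by
    rw [hf c hc]
    exact_mod_cast (hC c (hRC (hSR hc))).trans (add_le_add_left (hZ c hc).2 _)
  have hS := h.card_le_card_image_add hD (hSR.trans hRC) hbudget
  rw [Finset.image_congr hf] at hS
  have hhalf : 2 * (#(S.image Z) : ℝ) ≤ #S := by exact_mod_cast hSimage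
  calc (#(C.image (List.take t)) : ℝ) = #R := by rw [← hRimage, Finset.card_image_of_injOn hRinj]
    _ = #(R \ S) + #S := by exact_mod_cast (Finset.card_sdiff_add_card_eq_card hSR).symm
    _ ≤ 2 * E + N := by linarith

lemma card_le (h : CorrectsOnline C Dec n p E) (hD : (D : ℝ) ≤ p * n)
    (hC : ∀ c ∈ C, c.length = n) {ℓ N : ℝ} (hℓ : n ≤ ℓ + D) (hN : 1 ≤ N)
    (hpair : 2 * D ≤ n → ∀ T ⊆ C, N < #T →
      ∃ x ∈ T, ∃ y ∈ T, x ≠ y ∧ ShareSubseq ℓ (x.drop (n - 2 * D)) (y.drop (n - 2 * D))) :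
    (#C : ℝ) ≤ 6 * E + 2 * N := by
  have hprefix : (#(C.image (List.take (n - 2 * D))) : ℝ) ≤ 2 * E + N := by
    rcases le_or_gt (2 * D) n with hDn | hDn
    · exact h.card_image_take_le hD (fun c hc => by rwa [hC c hc]) (hpair hDn)
    -- The subtraction truncates here: the prefix is empty, so there is at most one.
    · have hempty : C.image (List.take (n - 2 * D)) ⊆ {[]} := by
        simp [Nat.sub_eq_zero_of_le hDn.le, Finset.subset_iff]
      have hone : (#(C.image (List.take (n - 2 * D))) : ℝ) ≤ 1 := by
        exact_mod_cast Finset.card_le_card hempty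
      linarith [h.nonneg hD]
  have hcode := h.card_le_two_mul_card_image_take_add hD (t := n - 2 * D) (s := n - (n - 2 * D))
    (fun c hc => by rw [List.length_drop, hC c hc]) (by lia)
  linarith

end CorrectsOnline

/-! ### The threshold bound -/

lemma bddAbove_advGood : BddAbove {p : ℝ | p ∈ Set.Icc (0 : ℝ) 1 ∧ advGood p} :=
  ⟨1, fun _ hp => hp.1.2⟩

lemma p0adv_nonneg : 0 ≤ p0adv := Real.sSup_nonneg fun _ hp => hp.1.1

lemma p0adv_le_one : p0adv ≤ 1 := Real.sSup_le (fun _ hp => hp.1.2) zero_le_one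

lemma not_advGood_of_p0adv_lt {q : ℝ} (hq : p0adv < q) (hq1 : q ≤ 1) : ¬ advGood q := fun h =>
  hq.not_ge (le_csSup bddAbove_advGood ⟨⟨p0adv_nonneg.trans hq.le, hq1⟩, h⟩)

lemma eventually_exists_shareSubseq_of_not_advGood {q δ : ℝ} (hq : 0 ≤ q) (hδ : 0 < δ)
    (h : ¬ advGood q) :
    ∀ᶠ s : ℕ in atTop, ∀ (t : ℕ) (T : Finset (List Bool)), (∀ c ∈ T, (c.drop t).length = s) →
      (2 : ℝ) ^ (δ * s) ≤ #T →
        ∃ x ∈ T, ∃ y ∈ T, x ≠ y ∧ ShareSubseq ((1 - q) * s) (x.drop t) (y.drop t) := by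
  unfold advGood at h
  push Not at h
  obtain ⟨s₀, hs₀⟩ := h δ hδ
  filter_upwards [eventually_ge_atTop s₀] with s hs t T hT hcard
  by_cases hinj : Set.InjOn (List.drop t) (T : Set (List Bool))
  · obtain ⟨_, hx, _, hy, hne, hshare⟩ := hs₀ s hs (T.image (List.drop t))
      (Finset.forall_mem_image.2 hT) (by rwa [Finset.card_image_of_injOn hinj])
    obtain ⟨x, hxT, rfl⟩ := Finset.mem_image.1 hx
    obtain ⟨y, hyT, rfl⟩ := Finset.mem_image.1 hy
    exact ⟨x, hxT, y, hyT, ne_of_apply_ne _ hne, hshare⟩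
  · simp only [Set.InjOn, Finset.mem_coe] at hinj
    push Not at hinj
    obtain ⟨x, hx, y, hy, hxy, hne⟩ := hinj
    refine ⟨x, hx, y, hy, hne, x.drop t, .refl _, hxy ▸ .refl _, ?_⟩
    rw [hT x hx]
    exact mul_le_of_le_one_left s.cast_nonneg (by linarith)

lemma eventually_le_floor_mul {p r : ℝ} (hr : 0 ≤ r) (hpr : 1 < p * r) :
    ∀ᶠ n : ℕ in atTop, (n : ℝ) ≤ ⌊p * n⌋₊ * r := by
  have hlarge : Tendsto (fun n : ℕ => (p * r - 1) * (n : ℝ)) atTop atTop :=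
    tendsto_natCast_atTop_atTop.const_mul_atTop (sub_pos.2 hpr)
  filter_upwards [hlarge.eventually_ge_atTop r] with n hn
  calc (n : ℝ) ≤ (p * n - 1) * r := by linarith
    _ ≤ ⌊p * n⌋₊ * r := by gcongr; exact (Nat.sub_one_lt_floor _).le

lemma mul_le_one_of_onGood_of_not_advGood {p q : ℝ} (hp : 0 ≤ p) (hq : 0 ≤ q) (hon : onGood p)
    (hadv : ¬ advGood q) : p * (3 - 2 * q) ≤ 1 := by
  by_contra! hpq
  have hp : 0 < p := hp.lt_of_ne (by rintro rfl; linarith)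
  have hr : 0 ≤ 3 - 2 * q := (pos_of_mul_pos_right (one_pos.trans hpq) hp.le).le
  obtain ⟨δ, hδ, hon⟩ := hon
  have hsuffix : Tendsto (fun n : ℕ => 2 * ⌊p * n⌋₊) atTop atTop :=
    (tendsto_nat_floor_atTop.comp (tendsto_natCast_atTop_atTop.const_mul_atTop hp)).const_mul_atTop'
      two_pos
  have hexp : Tendsto (fun n : ℕ => (2 : ℝ) ^ (δ / 2 * n)) atTop atTop :=
    (tendsto_rpow_atTop_of_base_gt_one 2 one_lt_two).comp
      (tendsto_natCast_atTop_atTop.const_mul_atTop (half_pos hδ))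
  obtain ⟨n₀, hn₀⟩ := eventually_atTop.1 <| (eventually_le_floor_mul hr hpq).and <|
    (hexp.eventually_gt_atTop 4).and <| hsuffix.eventually <|
    eventually_exists_shareSubseq_of_not_advGood hq (half_pos hδ) hadv
  obtain ⟨n, hn, C, hC, hCcard, Dec, -, hDec⟩ := hon (1 / 12) (by norm_num) n₀
  obtain ⟨hbudget, hN, hpair⟩ := hn₀ n hn
  set D := ⌊p * n⌋₊
  set N : ℝ := 2 ^ (δ / 2 * n)
  have hupper : (#C : ℝ) ≤ 6 * (1 / 12 * #C) + 2 * N := by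
    refine CorrectsOnline.card_le (D := D) (ℓ := (1 - q) * (2 * D : ℕ)) hDec
      (Nat.floor_le (by positivity)) hC ?_ (by linarith) fun hDn T hT hTcard => ?_
    · push_cast
      linarith
    · refine hpair _ T (fun c hc => by rw [List.length_drop, hC c (hT hc)]; lia) ?_
      have hDn : ((2 * D : ℕ) : ℝ) ≤ n := Nat.cast_le.2 hDn
      exact (Real.rpow_le_rpow_of_exponent_le one_le_two (by gcongr)).trans hTcard.le
  have hlower : N * N ≤ #C := by
    rwa [← Real.rpow_add two_pos, ← add_mul, add_halves]
  nlinarith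

lemma mul_le_one_of_onGood {p : ℝ} (hp : p ∈ Set.Icc (0 : ℝ) 1) (hon : onGood p) :
    p * (3 - 2 * p0adv) ≤ 1 := by
  rcases p0adv_le_one.eq_or_lt with h | h
  · rw [h]
    linarith [hp.2]
  · have hlim : Tendsto (fun q => p * (3 - 2 * q)) (𝓝[>] p0adv) (𝓝 (p * (3 - 2 * p0adv))) :=
      (by fun_prop : Continuous fun q : ℝ => p * (3 - 2 * q)).continuousWithinAt
    refine le_of_tendsto hlim ?_
    filter_upwards [Ioc_mem_nhdsGT h] with q hq
    exact mul_le_one_of_onGood_of_not_advGood hp.1 (p0adv_nonneg.trans hq.1.le) hon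
      (not_advGood_of_p0adv_lt hq.1 hq.2)

/-- `p0_on,d ≤ 1/(3 − 2·p0_adv)`; in particular, if `p0_adv < 1/2` then
`p0_on,d < 1/2`. -/
theorem online_threshold_le :
    p0ond ≤ 1 / (3 - 2 * p0adv) ∧ (p0adv < 1 / 2 → p0ond < 1 / 2) := by
  have hpos : 0 < 3 - 2 * p0adv := by linarith [p0adv_le_one]
  have hle : p0ond ≤ 1 / (3 - 2 * p0adv) :=
    Real.sSup_le (fun p hp => (le_div_iff₀ hpos).2 (mul_le_one_of_onGood hp.1 hp.2))
      (one_div_pos.2 hpos).le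
  exact ⟨hle, fun h => hle.trans_lt (one_div_lt_one_div_of_lt two_pos (by linarith))⟩
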